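/- Let G be a connected simple graph in which every vertex has degree at least 3. Then G contains a cycle C such that the graph obtained from G by deleting all edges of C is still connected. -/

import Mathlib

/-!
Root the graph at a vertex `r` and choose a cycle `C` for which the component `S` of `r` in
`G - E(C)` is as large as possible. If `S` is not everything, some edge `ab` of `G` leaves `S`, and
every such edge lies on `C`. Consider the graph `F` formed by the edges of `C` and the edges of `G`
not inside `S`, with `ab` removed. Vertices of `S` on `C` keep their two cycle edges, except for
`a`, and vertices outside `S` keep degree at least two. So `F` has no leaf other than possibly `a`,
whereas a forest with an edge has at least two leaves; hence `F` contains a cycle. Deleting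
that cycle instead of `C` keeps `S` connected and attaches `b` to it through the edge `ab`,
contradicting the choice of `C`.
-/

section

open SimpleGraph

variable {V : Type*} {G : SimpleGraph V}

theorem exists_ne_existsUnique_adj_of_isAcyclic [Finite V] (hG : G.IsAcyclic) (hne : G ≠ ⊥)
    (s : V) : ∃ v ≠ s, ∃! w, G.Adj v w := by
  classical
  have := Fintype.ofFinite V
  obtain ⟨x, y, hxy⟩ := ne_bot_iff_exists_adj.1 hne
  let c := G.connectedComponentMk x
  have hyc : y ∈ c.supp := c.mem_supp_of_adj_mem_supp rfl hxy
  have : Nontrivial c := ⟨⟨x, rfl⟩, ⟨y, hyc⟩, fun h ↦ hxy.ne (congrArg Subtype.val h)⟩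
  obtain ⟨u, v, huv, hu, hv⟩ := (hG.isTree_connectedComponent c).exists_ne_and_degree_eq_one
  obtain ⟨l, hls, hl⟩ : ∃ l : c, l.1 ≠ s ∧ c.toSimpleGraph.degree l = 1 := by
    by_cases h : u.1 = s
    · exact ⟨v, fun h' ↦ huv (Subtype.ext (h.trans h'.symm)), hv⟩
    · exact ⟨u, h, hu⟩
  obtain ⟨w, hw, huniq⟩ := degree_eq_one_iff_existsUnique_adj.1 hl
  refine ⟨l, hls, w, hw, fun z hz ↦ ?_⟩
  exact congrArg Subtype.val (huniq ⟨z, c.mem_supp_of_adj_mem_supp l.2 hz⟩ hz)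

theorem exists_isCycle_of_forall_ne_degree_ne_one [Finite V] [G.LocallyFinite] (hne : G ≠ ⊥)
    {r : V} (hdeg : ∀ v ≠ r, G.degree v ≠ 1) : ∃ (u : V) (C : G.Walk u u), C.IsCycle := by
  by_contra! hG
  obtain ⟨v, hvr, hv⟩ := exists_ne_existsUnique_adj_of_isAcyclic hG hne r
  exact hdeg v hvr (degree_eq_one_iff_existsUnique_adj.2 hv)

theorem exists_adj_ne_ne_of_three_le_degree {v : V} [Fintype (G.neighborSet v)]
    (hv : 3 ≤ G.degree v) (x y : V) : ∃ w, G.Adj v w ∧ w ≠ x ∧ w ≠ y := by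
  classical
  obtain ⟨w, hw, hwxy⟩ := Finset.exists_mem_notMem_of_card_lt_card
    (s := {x, y}) (t := G.neighborFinset v) (Finset.card_le_two.trans_lt hv)
  exact ⟨w, (G.mem_neighborFinset v w).1 hw, by simpa using hwxy⟩

theorem exists_ne_mem_edges_of_isCycle {u v : V} {C : G.Walk u u} (hC : C.IsCycle)
    (hv : v ∈ C.support) (x : V) : ∃ w ≠ x, s(v, w) ∈ C.edges := by
  have htwo := hC.ncard_neighborSet_toSubgraph_eq_two hv
  obtain ⟨w, hw, hwx⟩ := Set.exists_ne_of_one_lt_ncard (htwo ▸ one_lt_two) x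
  exact ⟨w, hwx, Walk.adj_toSubgraph_iff_mem_edges.1 hw⟩

/-- The vertex set of the component of `r` in `G - E`, to be maximised over the edge
sets `E` of cycles. -/
def rootComponent (G : SimpleGraph V) (r : V) (E : Set (Sym2 V)) : Set V :=
  {v | (G.deleteEdges E).Reachable r v}

theorem edge_mem_of_mem_rootComponent_of_notMem {r a b : V} {E : Set (Sym2 V)} (hab : G.Adj a b)
    (ha : a ∈ rootComponent G r E) (hb : b ∉ rootComponent G r E) : s(a, b) ∈ E := by
  by_contra hE
  exact hb (ha.trans (deleteEdges_adj.2 ⟨hab, hE⟩).reachable)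

theorem rootComponent_subset_rootComponent {r : V} {E E' : Set (Sym2 V)}
    (hE' : ∀ e ∈ E', e ∈ E ∨ ∃ v ∈ e, v ∉ rootComponent G r E) :
    rootComponent G r E ⊆ rootComponent G r E' := by
  classical
  rintro v ⟨p⟩
  have hp : ∀ x ∈ p.support, x ∈ rootComponent G r E := fun x hx ↦ (p.takeUntil x hx).reachable
  refine (p.transfer (G.deleteEdges E') fun e he ↦ ?_).reachable
  have heE := p.edges_subset_edgeSet he
  rw [edgeSet_deleteEdges] at heE ⊢
  refine ⟨heE.1, fun heE' ↦ ?_⟩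
  obtain h | ⟨x, hxe, hx⟩ := hE' e heE'
  · exact heE.2 h
  · exact hx (hp x (Walk.mem_support_of_mem_edges he hxe))

/-- The graph formed by the edges of `G` that belong to `E` or have an endpoint outside `S`.
When `S` is the component of a root in `G - E`, deleting these edges instead of `E` leaves `S`
connected. -/
def peripheralGraph (G : SimpleGraph V) (S : Set V) (E : Set (Sym2 V)) : SimpleGraph V :=
  G.deleteEdges {e | e ∉ E ∧ ∀ v ∈ e, v ∈ S}

theorem mem_edgeSet_peripheralGraph {S : Set V} {E : Set (Sym2 V)} {e : Sym2 V} :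
    e ∈ (peripheralGraph G S E).edgeSet ↔ e ∈ G.edgeSet ∧ (e ∈ E ∨ ∃ v ∈ e, v ∉ S) := by
  rw [peripheralGraph, edgeSet_deleteEdges, Set.mem_sdiff, Set.mem_ofPred_eq]
  push Not
  rw [or_iff_not_imp_left]

theorem peripheralGraph_adj {S : Set V} {E : Set (Sym2 V)} {u v : V} :
    (peripheralGraph G S E).Adj u v ↔ G.Adj u v ∧ (s(u, v) ∈ E ∨ u ∉ S ∨ v ∉ S) := by
  simpa using mem_edgeSet_peripheralGraph (G := G) (S := S) (E := E) (e := s(u, v))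

theorem not_isAcyclic_peripheralGraph_deleteEdges [Finite V] [G.LocallyFinite] {S : Set V}
    {u a b : V} {C : G.Walk u u} (hC : C.IsCycle)
    (hS : ∀ x ∈ S, ∀ y ∉ S, G.Adj x y → s(x, y) ∈ C.edges) (hdeg : ∀ v ∉ S, 3 ≤ G.degree v)
    (hab : G.Adj a b) (ha : a ∈ S) (hb : b ∉ S) :
    ¬ ((peripheralGraph G S C.edgeSet).deleteEdges {s(a, b)}).IsAcyclic := by
  intro hF
  set F := (peripheralGraph G S C.edgeSet).deleteEdges {s(a, b)} with hF_def
  have F_adj {x y : V} : F.Adj x y ↔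
      (G.Adj x y ∧ (s(x, y) ∈ C.edges ∨ x ∉ S ∨ y ∉ S)) ∧ s(x, y) ≠ s(a, b) := by
    simp only [hF_def, deleteEdges_adj, peripheralGraph_adj, Walk.mem_edgeSet,
      Set.mem_singleton_iff, ne_eq]
  have F_adj_of_mem_edges {x y : V} (h : s(x, y) ∈ C.edges) (hne : s(x, y) ≠ s(a, b)) :
      F.Adj x y := F_adj.2 ⟨⟨C.adj_of_mem_edges h, .inl h⟩, hne⟩
  have hF_ne : F ≠ ⊥ := by
    have haC := C.fst_mem_support_of_mem_edges (hS a ha b hb hab)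
    obtain ⟨x, hxb, hx⟩ := exists_ne_mem_edges_of_isCycle hC haC b
    exact ne_bot_iff_exists_adj.2 ⟨a, x, F_adj_of_mem_edges hx (by simp [hxb, hab.ne])⟩
  obtain ⟨y, hya, z, hyz, hz⟩ := exists_ne_existsUnique_adj_of_isAcyclic hF hF_ne a
  by_cases hy : y ∈ S
  · have hyzC : s(y, z) ∈ C.edges := by
      obtain ⟨⟨hG, h | h | h⟩, -⟩ := F_adj.1 hyz
      exacts [h, absurd hy h, hS y hy z h hG]
    obtain ⟨x, hxz, hx⟩ :=
      exists_ne_mem_edges_of_isCycle hC (C.fst_mem_support_of_mem_edges hyzC) z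
    have hyb : y ≠ b := ne_of_mem_of_not_mem hy hb
    exact hxz (hz x (F_adj_of_mem_edges hx (by simp [hya, hyb])))
  · obtain ⟨x, hyx, hxz, hxa⟩ := exists_adj_ne_ne_of_three_le_degree (hdeg y hy) z a
    exact hxz (hz x (F_adj.2 ⟨⟨hyx, .inr (.inl hy)⟩, by simp [hya, hxa]⟩))

theorem exists_isCycle_rootComponent_ssubset [Finite V] [G.LocallyFinite] (hconn : G.Preconnected)
    {r u : V} (hdeg : ∀ v ≠ r, 3 ≤ G.degree v) {C : G.Walk u u} (hC : C.IsCycle)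
    (hr : rootComponent G r C.edgeSet ≠ Set.univ) :
    ∃ (u' : V) (C' : G.Walk u' u'), C'.IsCycle ∧
      rootComponent G r C.edgeSet ⊂ rootComponent G r C'.edgeSet := by
  set S := rootComponent G r C.edgeSet
  have hrS : r ∈ S := Reachable.refl r
  obtain ⟨v, hv⟩ := (Set.ne_univ_iff_exists_notMem S).1 hr
  obtain ⟨p⟩ := hconn r v
  obtain ⟨⟨⟨a, b⟩, hab⟩, -, ha, hb⟩ := p.exists_boundary_dart S hrS hv
  have hF := not_isAcyclic_peripheralGraph_deleteEdges hC
    (fun x hx y hy hxy ↦ edge_mem_of_mem_rootComponent_of_notMem hxy hx hy)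
    (fun x hx ↦ hdeg x (ne_of_mem_of_not_mem hrS hx).symm) hab ha hb
  obtain ⟨u', C₀, hC₀⟩ : ∃ (u' : V) (C₀ : Walk _ u' u'), C₀.IsCycle := by
    simpa only [IsAcyclic, not_forall, not_not] using hF
  have hle : (peripheralGraph G S C.edgeSet).deleteEdges {s(a, b)} ≤ G :=
    (deleteEdges_le _).trans (deleteEdges_le _)
  let C' := C₀.mapLe hle
  have hC' : ∀ e ∈ C'.edges, (e ∈ C.edges ∨ ∃ v ∈ e, v ∉ S) ∧ e ≠ s(a, b) := by
    intro e he
    rw [Walk.edges_mapLe_eq_edges] at he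
    have heF := C₀.edges_subset_edgeSet he
    rw [edgeSet_deleteEdges] at heF
    exact ⟨(mem_edgeSet_peripheralGraph.1 heF.1).2, heF.2⟩
  have hsub : S ⊆ rootComponent G r C'.edgeSet :=
    rootComponent_subset_rootComponent fun e he ↦ (hC' e he).1
  have hb' : b ∈ rootComponent G r C'.edgeSet := by
    by_contra h
    have habC' := edge_mem_of_mem_rootComponent_of_notMem hab (hsub ha) h
    exact (hC' _ habC').2 rfl
  exact ⟨u', C', hC₀.mapLe hle, (Set.ssubset_iff_of_subset hsub).2 ⟨b, hb', hb⟩⟩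

theorem statement11_general [Finite V] [Nontrivial V] [G.LocallyFinite] (hconn : G.Connected)
    (r : V) (hdeg : ∀ v ≠ r, 3 ≤ G.degree v) :
    ∃ (u : V) (C : G.Walk u u), C.IsCycle ∧ (G.deleteEdges {e | e ∈ C.edges}).Connected := by
  obtain ⟨x, hrx⟩ := hconn.preconnected.exists_adj_of_nontrivial r
  obtain ⟨u₀, C₀, hC₀⟩ := exists_isCycle_of_forall_ne_degree_ne_one
    (ne_bot_iff_exists_adj.2 ⟨r, x, hrx⟩) fun v hv ↦ (Nat.lt_of_succ_lt (hdeg v hv)).ne'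
  obtain ⟨⟨u, C⟩, hC, hmax⟩ := exists_maximalFor_of_wellFoundedGT
    (fun c : Σ u, G.Walk u u ↦ c.2.IsCycle) (fun c ↦ rootComponent G r c.2.edgeSet) ⟨⟨u₀, C₀⟩, hC₀⟩
  have hspan : rootComponent G r C.edgeSet = Set.univ := by
    by_contra hne
    obtain ⟨u', C', hC', hlt⟩ := exists_isCycle_rootComponent_ssubset hconn.preconnected hdeg hC hne
    exact hlt.not_ge (hmax (j := ⟨u', C'⟩) hC' hlt.le)
  refine ⟨u, C, hC, connected_iff_exists_forall_reachable _ |>.2 ⟨r, fun v ↦ ?_⟩⟩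
  exact Set.eq_univ_iff_forall.1 hspan v

end

/-- Every connected finite simple graph with minimum degree
at least 3 contains a cycle whose edge deletion leaves the graph connected. -/
theorem statement11 {V : Type*} [Fintype V] [DecidableEq V]
    (G : SimpleGraph V) [DecidableRel G.Adj]
    (hconn : G.Connected)
    (hdeg : ∀ v : V, 3 ≤ G.degree v) :
    ∃ (u : V) (C : G.Walk u u), C.IsCycle ∧
      (G.deleteEdges {e | e ∈ C.edges}).Connected := by
  obtain ⟨r⟩ := hconn.nonempty
  have : Nontrivial V := SimpleGraph.nontrivial_of_degree_ne_zero (three_pos.trans_le (hdeg r)).ne'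
  exact statement11_general hconn r fun v _ ↦ hdeg v
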